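/- The K-vector space with basis {w_n : n ≥ 1}, equipped with the multilinear operations {w_n; w_{m_1},…,w_{m_q}} = C(n+1, q) · w_{n+m_1+⋯+m_q} for q ≥ 1 (and {w_n;} = w_n for q = 0), where C(n+1,q) is the binomial coefficient, is a brace algebra: these operations satisfy the brace relation. -/

import Mathlib

/-! The Faà di Bruno brace algebra: the vector space with basis `{wₙ : n ≥ 1}`
and operations `{wₙ; w_{m₁},…,w_{m_q}} = C(n+1, q) · w_{n+m₁+⋯+m_q}`. -/

section

variable (K : Type*) [Field K]

/-- All splittings of a list into a prefix and a suffix. -/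
def splits {α : Type*} (l : List α) : List (List α × List α) :=
  (List.range (l.length + 1)).map fun i => (l.take i, l.drop i)

/-- All factorizations of a list into `k` (possibly empty) consecutive factors. -/
def splitsN {α : Type*} : ℕ → List α → List (List (List α))
  | 0, l => if l.isEmpty then [[]] else []
  | k + 1, l => (splits l).flatMap fun p => (splitsN k p.2).map fun r => p.1 :: r

/-- The vector space with basis `{wₙ : n ≥ 1}`. -/
abbrev FdB := ℕ+ →₀ K

/-- Multilinear expansion of a word of vectors into a formal combination of
words of basis indices. -/
noncomputable def wordExpand : List (FdB K) → (List ℕ+ →₀ K)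
  | [] => Finsupp.single [] 1
  | b :: rest => b.sum fun m c => c • Finsupp.mapDomain (List.cons m) (wordExpand rest)

/-- The brace operations `{wₙ; w_{m₁},…,w_{m_q}} = C(n+1, q)·w_{n+m₁+⋯+m_q}`
(`{wₙ;} = wₙ` for `q = 0`), extended multilinearly. -/
noncomputable def Mfdb (a : FdB K) (l : List (FdB K)) : FdB K :=
  a.sum fun n c => c •
    (wordExpand K l).sum fun ms d => d •
      Finsupp.single (ms.foldl (· + ·) n) ((((n : ℕ) + 1).choose ms.length : K))

variable {K}

/-- The word on the right-hand side of the brace relation, for a factorization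
of `zs` into `2n+1` consecutive (possibly empty) blocks braced into `ys`. -/
noncomputable def braceRHSword (M : FdB K → List (FdB K) → FdB K) :
    List (List (FdB K)) → List (FdB K) → List (FdB K)
  | [P], [] => P
  | P :: B :: rest, y :: ys => P ++ M y B :: braceRHSword M rest ys
  | _, _ => []

/-- The brace relation
`{{x; y₁,…,yₙ}; z₁,…,z_m} = Σ {x; z₁,…,{y₁; z_{k₁},…},…,{yₙ; z_{kₙ},…},…,z_m}`,
the sum over all ways to choose `n` disjoint consecutive (possibly empty) blocks
of `z₁⋯z_m`, in order, braced into `y₁,…,yₙ`. -/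
def BraceRel (M : FdB K → List (FdB K) → FdB K) : Prop :=
  ∀ (x : FdB K) (ys zs : List (FdB K)),
    M (M x ys) zs =
      ((splitsN (2 * ys.length + 1) zs).map fun Zs => M x (braceRHSword M Zs ys)).sum

namespace FdBAux

open Polynomial

variable (K) in
/-- The embedding `wₙ ↦ Xⁿ`. -/
noncomputable def phi : FdB K →ₗ[K] K[X] :=
  Finsupp.linearCombination K (fun n : ℕ+ => (X : K[X]) ^ (n : ℕ))

theorem phi_single (n : ℕ+) (c : K) : phi K (Finsupp.single n c) = c • (X : K[X]) ^ (n : ℕ) := by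
  simp [phi]

theorem coeff_phi (a : FdB K) (n : ℕ+) : (phi K a).coeff (n : ℕ) = a n := by
  induction a using Finsupp.induction_linear with
  | zero => simp
  | add f g hf hg => simp [hf, hg]
  | single m c =>
    rw [phi_single, coeff_smul, coeff_X_pow, Finsupp.single_apply]
    by_cases h : m = n
    · simp [h]
    · have : (n : ℕ) ≠ m := fun h' => h (PNat.coe_injective h'.symm)
      simp [h, this]

theorem phi_injective : Function.Injective (phi K) := by
  intro a b h
  ext n
  rw [← coeff_phi, ← coeff_phi, h]

variable (K) in
/-- The substitution `X ↦ (1+t) X`. -/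
noncomputable def theta : K[X] →ₐ[K] PowerSeries K[X] :=
  Polynomial.aeval ((1 + PowerSeries.X) * PowerSeries.C (X : K[X]))

variable (K) in
/-- The generating series `(1+t) f((1+t)X)`. -/
noncomputable def Delta (f : K[X]) : PowerSeries K[X] := (1 + PowerSeries.X) * theta K f

variable (K) in
/-- The operators `Xⁿ ↦ C(n+1,r) Xⁿ`. -/
noncomputable def D (r : ℕ) : K[X] →ₗ[K] K[X] where
  toFun f := PowerSeries.coeff r (Delta K f)
  map_add' f g := by simp [Delta, mul_add]
  map_smul' c f := by
    simp [Delta]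

theorem D_apply (r : ℕ) (f : K[X]) : D K r f = PowerSeries.coeff r (Delta K f) := rfl

theorem coeff_one_add_pow (j r : ℕ) :
    PowerSeries.coeff r ((1 + PowerSeries.X : PowerSeries K[X]) ^ j) = (j.choose r : K[X]) := by
  have : (1 + PowerSeries.X : PowerSeries K[X]) ^ j = (((1 + X : K[X][X]) ^ j : K[X][X]) : PowerSeries K[X]) := by
    simp
  rw [this, Polynomial.coeff_coe, Polynomial.coeff_one_add_X_pow]

theorem Delta_X_pow (n : ℕ) :
    Delta K (X ^ n) = (1 + PowerSeries.X) ^ (n + 1) * PowerSeries.C ((X : K[X]) ^ n) := by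
  simp [Delta, theta, mul_pow]
  ring

theorem D_X_pow (r n : ℕ) : D K r (X ^ n) = ((n + 1).choose r : K[X]) * X ^ n := by
  rw [D_apply, Delta_X_pow, PowerSeries.coeff_mul_C, coeff_one_add_pow]

theorem wordExpand_comb (l : List (FdB K)) (g : ℕ → K[X]) :
    Finsupp.linearCombination K
      (fun ms : List ℕ+ => g ms.length * (ms.map fun m : ℕ+ => (X : K[X]) ^ (m : ℕ)).prod)
      (wordExpand K l) = g l.length * (l.map (phi K)).prod := by
  induction l generalizing g with
  | nil => simp [wordExpand]
  | cons b rest ih =>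
    have key : ∀ m : ℕ+, Finsupp.linearCombination K
      (fun ms : List ℕ+ => g ms.length * (ms.map fun m : ℕ+ => (X : K[X]) ^ (m : ℕ)).prod)
      (Finsupp.mapDomain (List.cons m) (wordExpand K rest)) =
        g (rest.length + 1) * (X ^ (m : ℕ)) * (rest.map (phi K)).prod := by
      intro m
      rw [Finsupp.linearCombination_mapDomain, ← ih (fun k => g (k + 1) * X ^ (m : ℕ))]
      congr 2
      funext ms
      simp [mul_assoc]
    rw [wordExpand, map_finsuppSum]
    simp only [map_smul, key]
    rw [List.map_cons, List.prod_cons, List.length_cons, phi, Finsupp.linearCombination_apply,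
      Finsupp.sum, Finsupp.sum, Finset.sum_mul, Finset.mul_sum]
    refine Finset.sum_congr rfl fun m _ => ?_
    rw [smul_mul_assoc, mul_smul_comm, mul_assoc]

theorem X_pow_foldl (ms : List ℕ+) (n : ℕ+) :
    (X : K[X]) ^ ((ms.foldl (· + ·) n : ℕ+) : ℕ) =
      X ^ (n : ℕ) * (ms.map fun m : ℕ+ => (X : K[X]) ^ (m : ℕ)).prod := by
  induction ms generalizing n with
  | nil => simp
  | cons m ms ih => rw [List.foldl_cons, ih]; simp [pow_add, mul_assoc]

theorem phi_M (a : FdB K) (l : List (FdB K)) :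
    phi K (Mfdb K a l) = D K l.length (phi K a) * (l.map (phi K)).prod := by
  have key : ∀ n : ℕ+, phi K ((wordExpand K l).sum fun ms d => d •
      Finsupp.single (ms.foldl (· + ·) n) ((((n : ℕ) + 1).choose ms.length : K))) =
      D K l.length (X ^ (n : ℕ)) * (l.map (phi K)).prod := by
    intro n
    rw [← wordExpand_comb l (fun k => D K k (X ^ (n : ℕ))), Finsupp.linearCombination_apply,
      map_finsuppSum]
    refine Finsupp.sum_congr fun ms _ => ?_
    rw [map_smul, phi_single, X_pow_foldl, D_X_pow, Algebra.smul_def (R := K) (Nat.cast _), map_natCast, mul_assoc]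
  rw [Mfdb, map_finsuppSum]
  simp only [map_smul, key]
  have ha : phi K a = a.sum fun n c => c • (X : K[X]) ^ (n : ℕ) := by
    rw [phi, Finsupp.linearCombination_apply]
  rw [ha, map_finsuppSum, Finsupp.sum, Finsupp.sum, Finset.sum_mul]
  refine Finset.sum_congr rfl fun m _ => ?_
  rw [map_smul, smul_mul_assoc]

theorem sum_splits {α β : Type*} [AddCommMonoid β] (l : List α) (F : List α × List α → β)
    (f : ℕ → ℕ → β) (h : ∀ p : List α × List α, p.1 ++ p.2 = l → F p = f p.1.length p.2.length) :
    ((splits l).map F).sum = ∑ p ∈ Finset.HasAntidiagonal.antidiagonal l.length, f p.1 p.2 := by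
  rw [Finset.Nat.sum_antidiagonal_eq_sum_range_succ f, splits, List.map_map]
  rw [Finset.sum_eq_multiset_sum, Finset.range_val, ← Multiset.coe_range, Multiset.map_coe,
    Multiset.sum_coe]
  congr 1
  refine List.map_congr_left fun i hi => ?_
  have := List.mem_range.1 hi
  rw [Function.comp, h _ (List.take_append_drop i l), List.length_take, List.length_drop,
    min_eq_left (by omega)]

theorem splitsN_one {α : Type*} (l : List α) : splitsN 1 l = [[l]] := by
  rw [splitsN, splits, List.range_succ, List.map_append, List.flatMap_append]
  have : List.flatMap (fun p : List α × List α => (splitsN 0 p.2).map fun r => p.1 :: r)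
      ((List.range l.length).map fun i => (l.take i, l.drop i)) = [] := by
    rw [List.flatMap_eq_nil_iff]
    intro p hp
    obtain ⟨i, hi, rfl⟩ := List.mem_map.1 hp
    have hi := List.mem_range.1 hi
    have : l.drop i ≠ [] := by simp; omega
    simp [splitsN, this]
  rw [this]
  simp [splitsN]

theorem sum_flatMap {α β : Type*} [AddCommMonoid β] (l : List α) (g : α → List β) :
    (l.flatMap g).sum = (l.map fun a => (g a).sum).sum := by
  induction l with
  | nil => simp
  | cons a l ih => simp [ih]

theorem hockey (q e : ℕ) :
    ∑ p ∈ Finset.HasAntidiagonal.antidiagonal e, (p.2 + q).choose q = (e + (q + 1)).choose (q + 1) := by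
  rw [Finset.Nat.sum_antidiagonal_eq_sum_range_succ_mk, ← Finset.sum_range_reflect]
  have := Nat.sum_range_add_choose e q
  rw [← add_assoc, ← this]
  refine Finset.sum_congr rfl fun i hi => ?_
  have := Finset.mem_range.1 hi
  congr 2
  simp; omega

theorem triple {β : Type*} [AddCommMonoid β] (n : ℕ) (F : ℕ → ℕ → ℕ → β) :
    ∑ u ∈ Finset.HasAntidiagonal.antidiagonal n,
      ∑ p ∈ Finset.HasAntidiagonal.antidiagonal u.2, F u.1 p.1 p.2 =
    ∑ u ∈ Finset.HasAntidiagonal.antidiagonal n,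
      ∑ p ∈ Finset.HasAntidiagonal.antidiagonal u.1, F p.1 p.2 u.2 := by
  rw [Finset.sum_sigma', Finset.sum_sigma']
  refine Finset.sum_nbij' (fun x => ⟨(x.1.1 + x.2.1, x.2.2), (x.1.1, x.2.1)⟩)
    (fun x => ⟨(x.2.1, x.2.2 + x.1.2), (x.2.2, x.1.2)⟩) ?_ ?_ ?_ ?_ ?_ <;>
  · rintro ⟨⟨a, b⟩, ⟨c, d⟩⟩ h
    simp only [Finset.mem_sigma, Finset.HasAntidiagonal.mem_antidiagonal] at h
    obtain ⟨h1, h2⟩ := h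
    subst h2
    subst h1
    simp [add_assoc]

theorem main_sum (x : FdB K) (ys : List (FdB K)) (k : ℕ) (zs : List (FdB K)) :
    ((splitsN (2 * ys.length + 1) zs).map fun Zs =>
      D K (k + (braceRHSword (Mfdb K) Zs ys).length) (phi K x) *
        ((braceRHSword (Mfdb K) Zs ys).map (phi K)).prod).sum =
    (zs.map (phi K)).prod * ∑ p ∈ Finset.HasAntidiagonal.antidiagonal zs.length,
      ((p.1 + ys.length).choose ys.length : K[X]) * D K (k + ys.length + p.1) (phi K x) *
        PowerSeries.coeff p.2 ((ys.map fun y => Delta K (phi K y)).prod) := by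
  induction ys generalizing k zs with
  | nil =>
    rw [List.length_nil, mul_zero, zero_add, splitsN_one,
      Finset.sum_eq_single (zs.length, 0)]
    · simp [braceRHSword, mul_comm]
    · rintro ⟨a, b⟩ hab hne
      have hb : b ≠ 0 := by
        rintro rfl
        simp at hab
        simp [hab] at hne
      simp [PowerSeries.coeff_one, hb]
    · simp
  | cons y ys ih =>
    set q := ys.length with hq
    set G := (ys.map fun y => Delta K (phi K y)).prod with hG
    have e : 2 * (y :: ys).length + 1 = (2 * q + 1) + 1 + 1 := by simp [hq]; ring
    rw [e, splitsN, List.map_flatMap, sum_flatMap]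
    rw [sum_splits zs _ (fun a b => (zs.map (phi K)).prod *
      ∑ u ∈ Finset.HasAntidiagonal.antidiagonal b, D K u.1 (phi K y) *
        ∑ p ∈ Finset.HasAntidiagonal.antidiagonal u.2,
      ((p.1 + q).choose q : K[X]) * D K (k + a + 1 + q + p.1) (phi K x) *
        PowerSeries.coeff p.2 G)]
    · rw [← Finset.mul_sum]
      congr 1
      have inner : ∀ a b : ℕ, ∑ u ∈ Finset.HasAntidiagonal.antidiagonal b, D K u.1 (phi K y) *
          ∑ p ∈ Finset.HasAntidiagonal.antidiagonal u.2,
            ((p.1 + q).choose q : K[X]) * D K (k + a + 1 + q + p.1) (phi K x) *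
              PowerSeries.coeff p.2 G =
          ∑ p ∈ Finset.HasAntidiagonal.antidiagonal b,
            ((p.1 + q).choose q : K[X]) * D K (k + a + 1 + q + p.1) (phi K x) *
              PowerSeries.coeff p.2 (Delta K (phi K y) * G) := by
        intro a b
        have := congrArg (PowerSeries.coeff b) (mul_left_comm (Delta K (phi K y))
          (PowerSeries.mk fun s => ((s + q).choose q : K[X]) *
            D K (k + a + 1 + q + s) (phi K x)) G)
        rw [PowerSeries.coeff_mul, PowerSeries.coeff_mul] at this
        simp only [PowerSeries.coeff_mk] at this
        rw [← this]
        refine Finset.sum_congr rfl fun u _ => ?_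
        rw [PowerSeries.coeff_mul, D_apply]
        simp only [PowerSeries.coeff_mk]
      simp only [inner, List.map_cons, List.prod_cons, List.length_cons]
      rw [← hG, ← hq]
      generalize Delta K (phi K y) * G = W
      rw [triple zs.length (fun a c d => ((c + q).choose q : K[X]) *
        D K (k + a + 1 + q + c) (phi K x) * PowerSeries.coeff d W)]
      refine Finset.sum_congr rfl fun e _ => ?_
      rw [← hockey, Nat.cast_sum, Finset.sum_mul, Finset.sum_mul]
      refine Finset.sum_congr rfl fun p hp => ?_
      have hp := Finset.HasAntidiagonal.mem_antidiagonal.1 hp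
      rw [← hp]
      congr 4
      ring
    · rintro ⟨P, r⟩ hp
      simp only at hp ⊢
      rw [splitsN, List.map_flatMap, List.map_flatMap, sum_flatMap]
      rw [sum_splits r _ (fun a b => (zs.map (phi K)).prod * (D K a (phi K y) *
        ∑ p ∈ Finset.HasAntidiagonal.antidiagonal b,
          ((p.1 + q).choose q : K[X]) * D K (k + P.length + 1 + q + p.1) (phi K x) *
          PowerSeries.coeff p.2 G)), Finset.mul_sum]
      rintro ⟨B, s⟩ hr
      simp only at hr ⊢
      have := ih (k + P.length + 1) s
      subst hr
      subst hp
      rw [List.map_append, List.map_append, List.prod_append, List.prod_append]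
      have e2 : ∀ a b c d S : K[X], (a * (b * c)) * (d * S) = (a * b * d) * (c * S) := by
        intros; ring
      rw [e2, ← this, ← List.sum_map_mul_left, List.map_map, List.map_map]
      congr 2
      funext Zs
      simp only [Function.comp, braceRHSword, List.length_append, List.length_cons,
        List.map_append, List.map_cons, List.prod_append, List.prod_cons, phi_M]
      have e3 : ∀ L, k + (P.length + (L + 1)) = k + P.length + 1 + L := by intro; ring
      rw [e3]
      ring

theorem theta_prod (ys : List K[X]) :
    (ys.map (Delta K)).prod = (1 + PowerSeries.X) ^ ys.length * theta K ys.prod := by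
  induction ys with
  | nil => simp
  | cons y ys ih => simp [ih, Delta]; ring

theorem final_sum (f : K[X]) (q r : ℕ) (h : K[X]) :
    ∑ p ∈ Finset.HasAntidiagonal.antidiagonal r, ((p.1 + q).choose q : K[X]) * D K (q + p.1) f *
      PowerSeries.coeff p.2 ((1 + PowerSeries.X) ^ q * theta K h) = D K r (D K q f * h) := by
  induction f using Polynomial.induction_on' with
  | add f g hf hg => 
    simp only [map_add, add_mul, mul_add, Finset.sum_add_distrib, hf, hg]
  | monomial n a =>
    rw [← mul_one a, ← smul_eq_mul, ← smul_monomial, monomial_one_right_eq_X_pow]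
    simp only [map_smul, mul_smul_comm, smul_mul_assoc, ← Finset.smul_sum]
    congr 1
    simp only [D_X_pow]
    by_cases hn : q ≤ n + 1
    · obtain ⟨j, hj⟩ := Nat.exists_eq_add_of_le hn
      have e1 : D K r (((n + 1).choose q : K[X]) * X ^ n * h) =
          ((n + 1).choose q : K[X]) * PowerSeries.coeff r (((1 + PowerSeries.X) ^ j *
            ((1 + PowerSeries.X) ^ q * theta K h)) * PowerSeries.C ((X : K[X]) ^ n)) := by
        rw [mul_assoc, ← nsmul_eq_mul, map_nsmul, nsmul_eq_mul, D_apply]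
        congr 2
        have := Delta_X_pow (K := K) n
        rw [hj] at this
        rw [Delta, map_mul, ← mul_assoc, ← Delta, this]
        ring
      rw [e1, PowerSeries.coeff_mul_C, PowerSeries.coeff_mul, Finset.sum_mul, Finset.mul_sum]
      refine Finset.sum_congr rfl fun p _ => ?_
      rw [coeff_one_add_pow]
      have : ((p.1 + q).choose q) * ((n + 1).choose (q + p.1)) =
          (n + 1).choose q * j.choose p.1 := by
        have h1 := Nat.choose_mul (n := n + 1) (k := q + p.1) (s := q) (by omega)
        rw [hj, Nat.add_sub_cancel_left, Nat.add_sub_cancel_left] at h1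
        rw [hj, mul_comm, add_comm p.1 q, h1]
      have := congrArg (Nat.cast : ℕ → K[X]) this
      push_cast at this
      linear_combination X ^ n * PowerSeries.coeff p.2 ((1 + PowerSeries.X) ^ q * theta K h) * this
    · rw [Nat.choose_eq_zero_of_lt (by omega)]
      simp only [Nat.cast_zero, zero_mul, map_zero]
      refine Finset.sum_eq_zero fun p _ => ?_
      rw [Nat.choose_eq_zero_of_lt (show n + 1 < q + p.1 by omega)]
      simp

end FdBAux

/-- The `K`-vector space with basis `{wₙ : n ≥ 1}`, equipped
with the multilinear operations
`{wₙ; w_{m₁},…,w_{m_q}} = C(n+1, q) · w_{n+m₁+⋯+m_q}` for `q ≥ 1`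
(and `{wₙ;} = wₙ` for `q = 0`), where `C(n+1,q)` is the binomial coefficient, is
a brace algebra: these operations satisfy the brace relation. -/
theorem fdb_is_brace_algebra (K : Type*) [Field K] : BraceRel (Mfdb K) := by
  intro x ys zs
  apply FdBAux.phi_injective
  rw [map_list_sum, List.map_map]
  have h := FdBAux.main_sum x ys 0 zs
  have h2 := FdBAux.theta_prod (ys.map (FdBAux.phi K))
  rw [List.map_map, List.length_map] at h2
  simp only [zero_add] at h
  rw [show (ys.map fun y => FdBAux.Delta K (FdBAux.phi K y)) =
    ys.map (FdBAux.Delta K ∘ FdBAux.phi K) from rfl, h2, FdBAux.final_sum] at h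
  rw [FdBAux.phi_M, FdBAux.phi_M, mul_comm, ← h]
  congr 2
  funext Zs
  exact (FdBAux.phi_M _ _).symm

end
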